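/- Let d ≥ 1 and f : [0,1]^d → ℝ. Then f admits a MARS representation, i.e., f = f_{a₀,{ν_S}} on [0,1]^d for some (a₀,{ν_S}), if and only if there exist a₀ ∈ ℝ and, for each nonempty S ⊆ {1,…,d}, a function g_S : [0,1]^S → ℝ that has finite Hardy–Krause variation anchored at 0, is coordinate-wise right-continuous, and is coordinate-wise left-continuous at each point with some coordinate equal to 1 in each such coordinate, such that f(x) = a₀ + Σ_{∅≠S⊆{1,…,d}} ∫_{∏_{j∈S}[0,x_j]} g_S(t) dt for every x ∈ [0,1]^d (Lebesgue integrals on ℝ^S). Moreover, the two representations correspond via g_S(t) = ν_S([0,t] ∩ ∏_{j∈S}[0,1)) for t ∈ [0,1]^S, and under this correspondence Σ_{∅≠S} |ν_S|(∏_{j∈S}[0,1) \ {0}) = Σ_{∅≠S} V_HK0(g_S). -/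

import Mathlib

open Finset MeasureTheory
open scoped ENNReal

/-- A MARS representation: a constant `a0` together with, for each (nonempty) subset `S`
of coordinates, a finite signed Borel measure on `ℝ^S` concentrated on `Π_{j∈S} [0,1)`. -/
structure MarsRep (d : ℕ) where
  a0 : ℝ
  ν : ∀ S : Finset (Fin d), SignedMeasure ({j // j ∈ S} → ℝ)
  conc : ∀ S : Finset (Fin d),
    (ν S).totalVariation {t : {j // j ∈ S} → ℝ | ∀ j, 0 ≤ t j ∧ t j < 1}ᶜ = 0

/-- Integration of a real function against a finite signed measure. -/
noncomputable def sIntegral {α : Type*} [MeasurableSpace α]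
    (ν : SignedMeasure α) (f : α → ℝ) : ℝ :=
  (∫ t, f t ∂ν.toJordanDecomposition.posPart) -
    (∫ t, f t ∂ν.toJordanDecomposition.negPart)

/-- The function `f_{a₀,{ν_S}}` associated with a MARS representation. -/
noncomputable def marsFun {d : ℕ} (R : MarsRep d) (x : Fin d → ℝ) : ℝ :=
  R.a0 + ∑ S : Finset (Fin d),
    if S.Nonempty then
      sIntegral (R.ν S) fun t => ∏ j : {j // j ∈ S}, max (x j.1 - t j) 0
    else 0

/-- The variation `V({ν_S}) = Σ_{∅ ≠ S} |ν_S|(Π_{j∈S}[0,1) \ {0})` of a MARS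
representation. -/
noncomputable def marsVar {d : ℕ} (R : MarsRep d) : ℝ≥0∞ :=
  ∑ S : Finset (Fin d),
    if S.Nonempty then
      (R.ν S).totalVariation
        ({t : {j // j ∈ S} → ℝ | ∀ j, 0 ≤ t j ∧ t j < 1} \ {fun _ => 0})
    else 0

/-- The quasi-volume `Δ(g; [u,v])` of `g` on the axis-aligned rectangle `[u,v]`. -/
noncomputable def qvol {ι : Type*} [Fintype ι] [DecidableEq ι]
    (g : (ι → ℝ) → ℝ) (u v : ι → ℝ) : ℝ :=
  ∑ δ : ι → Bool,
    (-1 : ℝ) ^ (Finset.univ.filter fun k => δ k = true).card *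
      g fun k => if δ k then u k else v k

/-- The Vitali variation of `g : [0,1]^ι → ℝ`: the supremum over all axis-aligned grid
splits of `[0,1]^ι` of the sum of the absolute quasi-volumes of the cells. -/
noncomputable def vitali {ι : Type*} [Fintype ι] [DecidableEq ι]
    (g : (ι → ℝ) → ℝ) : ℝ≥0∞ :=
  ⨆ (N : ι → ℕ) (u : ∀ k, Fin (N k + 1) → ℝ) (_ : ∀ k, StrictMono (u k))
      (_ : ∀ k, u k 0 = 0) (_ : ∀ k, u k (Fin.last (N k)) = 1),
    ∑ l : ∀ k, Fin (N k),
      ENNReal.ofReal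
        |qvol g (fun k => u k ((l k).castSucc)) fun k => u k ((l k).succ)|

/-- The Hardy–Krause variation of `g` anchored at `0`: the sum over nonempty `T ⊆ ι`
of the Vitali variations of the faces of `g` (coordinates outside `T` set to `0`). -/
noncomputable def hk0 {ι : Type*} [Fintype ι] [DecidableEq ι]
    (g : (ι → ℝ) → ℝ) : ℝ≥0∞ :=
  ∑ T : Finset ι,
    if T.Nonempty then
      vitali fun t : {j // j ∈ T} → ℝ =>
        g fun k => if h : k ∈ T then t ⟨k, h⟩ else 0
    else 0

/-- The regularity conditions on a face function `g` in Proposition 2.4: finite HK0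
variation, coordinate-wise right-continuity on the cube, and coordinate-wise
left-continuity (within the cube) at points with a coordinate equal to `1`. -/
def GoodFace {ι : Type*} [Fintype ι] [DecidableEq ι] (g : (ι → ℝ) → ℝ) : Prop :=
  hk0 g ≠ ⊤ ∧
  (∀ t : ι → ℝ, (∀ j, t j ∈ Set.Icc (0 : ℝ) 1) → ∀ j0,
    ContinuousWithinAt (fun s => g (Function.update t j0 s))
      (Set.Icc (t j0) 1) (t j0)) ∧
  (∀ t : ι → ℝ, (∀ j, t j ∈ Set.Icc (0 : ℝ) 1) → ∀ j0, t j0 = 1 →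
    ContinuousWithinAt (fun s => g (Function.update t j0 s))
      (Set.Icc 0 (t j0)) (t j0))

/-- The "CDF" `t ↦ ν_S([0,t] ∩ Π_{j∈S}[0,1))` of the `S`-component of a MARS
representation. -/
noncomputable def repCDF {d : ℕ} (R : MarsRep d) (S : Finset (Fin d))
    (t : {j // j ∈ S} → ℝ) : ℝ :=
  R.ν S {s | ∀ j, 0 ≤ s j ∧ s j ≤ t j ∧ s j < 1}

/-!
The quasi-volume of `t ↦ μ (-∞, t]` on a box is the mass of the half-open box, so the
Hardy–Krause variation of a distribution function is the total variation of its measure away from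
the origin, and Fubini turns `∫ ∏ⱼ (xⱼ - tⱼ)₊ dν(t)` into the integral over `[0, x]` of the
distribution function of `ν`.

Conversely, let `g` have finite Hardy–Krause variation. On a finite grid, `g` is the distribution
function of the signed measure whose atoms, at the upper corners of the cells of all faces of the
cube, are the increments of `g`; its mass is at most `|g 0|` plus the variation of `g`. Refining the
grid, weak compactness yields a limiting signed measure, whose distribution function agrees with `g`
at every `t` for which the frontier of `(-∞, t]` is null. Almost every `t` is of this kind, which is
all that the integrals see.
-/

open Filter Topology

section QuasiVolume

variable {ι : Type*} [Fintype ι] [DecidableEq ι]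

lemma qvol_sub (F G : (ι → ℝ) → ℝ) (u v : ι → ℝ) :
    qvol (fun t => F t - G t) u v = qvol F u v - qvol G u v := by
  simp only [qvol, mul_sub, Finset.sum_sub_distrib]

lemma qvol_sum_mul {κ : Type*} (s : Finset κ) (c : κ → ℝ) (G : κ → (ι → ℝ) → ℝ) (u v : ι → ℝ) :
    qvol (fun t => ∑ i ∈ s, c i * G i t) u v = ∑ i ∈ s, c i * qvol (G i) u v := by
  simp only [qvol, Finset.mul_sum, mul_left_comm]
  exact Finset.sum_comm

lemma qvol_prod (a : ι → ℝ → ℝ) (u v : ι → ℝ) :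
    qvol (fun t => ∏ k, a k (t k)) u v = ∏ k, (a k (v k) - a k (u k)) := by
  have hbool (k : ι) : a k (v k) - a k (u k) = ∑ b : Bool, if b then -a k (u k) else a k (v k) := by
    rw [Fintype.sum_bool]
    simp only [reduceIte, Bool.false_eq_true]
    ring
  simp only [hbool, Finset.prod_univ_sum, Fintype.piFinset_univ, qvol]
  refine Finset.sum_congr rfl fun δ _ => ?_
  rw [← Finset.prod_const, Finset.prod_filter, ← Finset.prod_mul_distrib]
  refine Finset.prod_congr rfl fun k _ => ?_
  cases δ k <;> simp

lemma qvol_integral {Ω : Type*} [MeasurableSpace Ω] (μ : Measure Ω) (G : Ω → (ι → ℝ) → ℝ)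
    (hG : ∀ t, Integrable (fun ω => G ω t) μ) (u v : ι → ℝ) :
    qvol (fun t => ∫ ω, G ω t ∂μ) u v = ∫ ω, qvol (G ω) u v ∂μ := by
  simp only [qvol]
  rw [integral_finsetSum _ fun δ _ => (hG _).const_mul _]
  simp only [integral_const_mul]

lemma qvol_measureReal_Iic (p : Measure (ι → ℝ)) [IsFiniteMeasure p] {u v : ι → ℝ} (huv : u ≤ v) :
    qvol (fun t => p.real (Set.Iic t)) u v = p.real (Set.univ.pi fun k => Set.Ioc (u k) (v k)) := by
  classical
  have hIic (s t : ι → ℝ) : (Set.Iic t).indicator (1 : (ι → ℝ) → ℝ) s =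
      ∏ k, (Set.Ici (s k)).indicator 1 (t k) := by
    simp only [Set.indicator_apply, Set.mem_Iic, Set.mem_Ici, Pi.le_def, Pi.one_apply,
      Finset.prod_ite_zero, Finset.mem_univ, forall_const, Finset.prod_const_one]
  have hIoc (s : ι → ℝ) (k : ι) : (Set.Ici (s k)).indicator (1 : ℝ → ℝ) (v k) -
      (Set.Ici (s k)).indicator 1 (u k) = if s k ∈ Set.Ioc (u k) (v k) then 1 else 0 := by
    have := huv k
    simp only [Set.indicator_apply, Set.mem_Ici, Set.mem_Ioc, Pi.one_apply]
    grind
  have hqvol (s : ι → ℝ) : qvol (fun t => (Set.Iic t).indicator (1 : (ι → ℝ) → ℝ) s) u v =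
      (Set.univ.pi fun k => Set.Ioc (u k) (v k)).indicator 1 s := by
    simp only [hIic s]
    rw [qvol_prod fun k => (Set.Ici (s k)).indicator 1, Finset.prod_congr rfl fun k _ => hIoc s k]
    simp only [Finset.prod_ite_zero, Finset.prod_const_one, Set.indicator_apply,
      Set.mem_univ_pi, Finset.mem_univ, forall_const, Pi.one_apply]
  simp only [← integral_indicator_one measurableSet_Iic]
  rw [qvol_integral p (fun s t => (Set.Iic t).indicator 1 s)
    fun t => (integrable_const 1).indicator measurableSet_Iic]
  simp only [hqvol]
  exact integral_indicator_one (MeasurableSet.univ_pi fun _ => measurableSet_Ioc)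

end QuasiVolume

section GridCells

variable {α : Type*} [LinearOrder α]

lemma iUnion_Ioc_castSucc_succ {N : ℕ} {u : Fin (N + 1) → α} (hu : Monotone u) :
    ⋃ i : Fin N, Set.Ioc (u i.castSucc) (u i.succ) = Set.Ioc (u 0) (u (Fin.last N)) := by
  refine Set.Subset.antisymm (Set.iUnion_subset fun i =>
    Set.Ioc_subset_Ioc (hu (Fin.zero_le _)) (hu (Fin.le_last _))) fun x hx => ?_
  have exists_cell (j : Fin (N + 1)) (hj : x ≤ u j) :
      ∃ i : Fin N, x ∈ Set.Ioc (u i.castSucc) (u i.succ) := by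
    induction j using Fin.induction with
    | zero => exact absurd hj hx.1.not_ge
    | succ i ih => exact (le_or_gt x (u i.castSucc)).elim ih fun h => ⟨i, h, hj⟩
  exact Set.mem_iUnion.2 (exists_cell _ hx.2)

lemma pairwise_disjoint_Ioc_castSucc_succ {N : ℕ} {u : Fin (N + 1) → α} (hu : Monotone u) :
    Pairwise (Function.onFun Disjoint fun i : Fin N => Set.Ioc (u i.castSucc) (u i.succ)) :=
  (pairwise_disjoint_on _).2 fun _ _ hij =>
    Set.Ioc_disjoint_Ioc_of_le (hu (Fin.succ_le_castSucc_iff.2 hij))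

variable {ι : Type*} {N : ι → ℕ}

/-- The half-open cell `∏ₖ (u k (l k), u k (l k + 1)]` of the grid with breakpoints `u k`. -/
def gridCell (u : ∀ k, Fin (N k + 1) → α) (l : ∀ k, Fin (N k)) : Set (ι → α) :=
  Set.univ.pi fun k => Set.Ioc (u k (l k).castSucc) (u k (l k).succ)

lemma iUnion_gridCell {u : ∀ k, Fin (N k + 1) → α} (hu : ∀ k, Monotone (u k)) :
    ⋃ l, gridCell u l = Set.univ.pi fun k => Set.Ioc (u k 0) (u k (Fin.last (N k))) := by
  simp only [← iUnion_Ioc_castSucc_succ (hu _)]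
  exact Set.iUnion_univ_pi fun k (i : Fin (N k)) => Set.Ioc (u k i.castSucc) (u k i.succ)

lemma pairwise_disjoint_gridCell {u : ∀ k, Fin (N k + 1) → α} (hu : ∀ k, Monotone (u k)) :
    Pairwise (Function.onFun Disjoint (gridCell u)) := fun _ _ hl =>
  let ⟨k, hk⟩ := Function.ne_iff.1 hl
  Set.disjoint_univ_pi.2 ⟨k, pairwise_disjoint_Ioc_castSucc_succ (hu k) hk⟩

lemma measurableSet_gridCell [Finite ι] (u : ∀ k, Fin (N k + 1) → ℝ) (l : ∀ k, Fin (N k)) :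
    MeasurableSet (gridCell u l) :=
  MeasurableSet.univ_pi fun _ => measurableSet_Ioc

end GridCells

section MutuallySingular

variable {α : Type*} {mα : MeasurableSpace α}

lemma measure_add_measure_eq_abs_sub_add_min (p n : Measure α) [IsFiniteMeasure p]
    [IsFiniteMeasure n] (c : Set α) :
    p c + n c = ENNReal.ofReal |p.real c - n.real c| + 2 * min (p c) (n c) := by
  rw [← ofReal_measureReal (μ := p), ← ofReal_measureReal (μ := n), ← ENNReal.ofReal_min,
    ← ENNReal.ofReal_ofNat, ← ENNReal.ofReal_mul zero_le_two,
    ← ENNReal.ofReal_add measureReal_nonneg measureReal_nonneg,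
    ← ENNReal.ofReal_add (abs_nonneg _) (by positivity)]
  grind

variable [PseudoEMetricSpace α] [T2Space α] [OpensMeasurableSpace α] {p n : Measure α}
  [IsFiniteMeasure p] [IsFiniteMeasure n] [p.InnerRegularCompactLTTop] [n.InnerRegularCompactLTTop]

lemma exists_disjoint_isCompact_measure_compl_lt (hpn : p ⟂ₘ n) {ε : ℝ≥0∞} (hε : ε ≠ 0) :
    ∃ K L, IsCompact K ∧ IsCompact L ∧ Disjoint K L ∧ p Kᶜ < ε ∧ n Lᶜ < ε := by
  obtain ⟨s, hs, hps, hns⟩ := hpn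
  obtain ⟨K, hKs, hK, hpK⟩ := hs.compl.exists_isCompact_sdiff_lt (measure_ne_top p _) hε
  obtain ⟨L, hLs, hL, hnL⟩ := hs.exists_isCompact_sdiff_lt (measure_ne_top n _) hε
  have compl_le {μ : Measure α} {t C : Set α} (ht : μ t = 0) : μ Cᶜ ≤ μ (tᶜ \ C) := by
    rw [← measure_sdiff_null ht, Set.sdiff_eq, Set.sdiff_eq, Set.inter_comm]
  refine ⟨K, L, hK, hL, disjoint_compl_left.mono hKs hLs, (compl_le hps).trans_lt hpK, ?_⟩
  exact (compl_le hns).trans_lt (by rwa [compl_compl])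

lemma exists_pos_forall_measure_iUnion_le (hpn : p ⟂ₘ n) {ε : ℝ≥0∞} (hε : ε ≠ 0) :
    ∃ δ : ℝ≥0∞, 0 < δ ∧ ∀ {κ : Type*} [Fintype κ] (c : κ → Set α), (∀ i, MeasurableSet (c i)) →
      Pairwise (Function.onFun Disjoint c) → (∀ i, Metric.ediam (c i) < δ) →
      (p + n) (⋃ i, c i) ≤ ∑ i, ENNReal.ofReal |p.real (c i) - n.real (c i)| + ε := by
  obtain ⟨K, L, hK, hL, hKL, hpK, hnL⟩ := exists_disjoint_isCompact_measure_compl_lt hpn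
    (show ε / 4 ≠ 0 from ENNReal.div_ne_zero.2 ⟨hε, ENNReal.ofNat_ne_top⟩)
  obtain ⟨δ, hδ, hdist⟩ := Metric.exists_pos_forall_lt_edist hK hL.isClosed hKL
  refine ⟨δ, by simpa using hδ, fun {κ} _ c hc hdisj hdiam => ?_⟩
  have min_le (i : κ) : min (p (c i)) (n (c i)) ≤ p (c i ∩ Kᶜ) + n (c i ∩ Lᶜ) := by
    by_cases hcK : Disjoint (c i) K
    · rw [Set.inter_eq_left.2 hcK.subset_compl_right]
      exact (min_le_left _ _).trans le_self_add
    have hcL : Disjoint (c i) L := Set.disjoint_left.2 fun y hyc hyL => by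
      obtain ⟨x, hxc, hxK⟩ := Set.not_disjoint_iff.1 hcK
      exact (hdist x hxK y hyL).not_ge ((Metric.edist_le_ediam_of_mem hxc hyc).trans (hdiam i).le)
    rw [Set.inter_eq_left.2 hcL.subset_compl_right]
    exact (min_le_right _ _).trans le_add_self
  have sum_le (μ : Measure α) {C : Set α} (hC : IsCompact C) : ∑ i, μ (c i ∩ Cᶜ) ≤ μ Cᶜ := by
    rw [← tsum_fintype (L := .unconditional _), ← measure_iUnion
      (fun i j hij => (hdisj hij).mono Set.inter_subset_left Set.inter_subset_left)
      fun i => (hc i).inter hC.measurableSet.compl]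
    exact measure_mono (Set.iUnion_subset fun _ => Set.inter_subset_right)
  calc (p + n) (⋃ i, c i) = ∑ i, (p (c i) + n (c i)) := by
        rw [measure_iUnion hdisj hc, tsum_fintype]; rfl
    _ ≤ ∑ i, (ENNReal.ofReal |p.real (c i) - n.real (c i)| +
          2 * (p (c i ∩ Kᶜ) + n (c i ∩ Lᶜ))) := by
        simp only [measure_add_measure_eq_abs_sub_add_min p n]
        gcongr with i
        exact min_le i
    _ ≤ ∑ i, ENNReal.ofReal |p.real (c i) - n.real (c i)| + 2 * (ε / 4 + ε / 4) := by
        rw [Finset.sum_add_distrib, ← Finset.mul_sum, Finset.sum_add_distrib]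
        gcongr
        · exact (sum_le p hK).trans hpK.le
        · exact (sum_le n hL).trans hnL.le
    _ = ∑ i, ENNReal.ofReal |p.real (c i) - n.real (c i)| + ε := by
        congr 1
        rw [← two_mul, ← mul_assoc, show (2 : ℝ≥0∞) * 2 = 4 by norm_num]
        exact ENNReal.mul_div_cancel (by simp) (by simp)

end MutuallySingular

section Vitali

lemma exists_grid_ediam_lt {δ : ℝ≥0∞} (hδ : 0 < δ) :
    ∃ (N : ℕ) (u : Fin (N + 1) → ℝ), StrictMono u ∧ u 0 = 0 ∧ u (Fin.last N) = 1 ∧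
      ∀ i : Fin N, Metric.ediam (Set.Ioc (u i.castSucc) (u i.succ)) < δ := by
  obtain ⟨N, hN⟩ := ENNReal.exists_inv_nat_lt hδ.ne'
  have hN' : (0 : ℝ) < N + 1 := by positivity
  refine ⟨N + 1, fun i => (i : ℝ) / (N + 1), fun i j hij => ?_, by simp, ?_, fun i => ?_⟩
  · exact div_lt_div_of_pos_right (Nat.cast_lt.2 hij) hN'
  · simp [hN'.ne']
  · have hstep : ((i.succ : Fin (N + 2)) : ℝ) / (N + 1) - (i.castSucc : Fin (N + 2)) / (N + 1) =
        ((N : ℝ) + 1)⁻¹ := by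
      simp only [Fin.val_succ, Fin.val_castSucc, Nat.cast_succ]
      ring
    rw [Real.ediam_Ioc, hstep]
    refine hN.trans_le' ?_
    rw [ENNReal.ofReal_inv_of_pos hN', ENNReal.inv_le_inv, ← ENNReal.ofReal_natCast]
    exact ENNReal.ofReal_le_ofReal (by linarith)

variable {ι : Type*} [Fintype ι] [DecidableEq ι] {p n : Measure (ι → ℝ)}
  [IsFiniteMeasure p] [IsFiniteMeasure n]

lemma qvol_measureReal_Iic_sub {N : ι → ℕ} {u : ∀ k, Fin (N k + 1) → ℝ} (hu : ∀ k, Monotone (u k))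
    (l : ∀ k, Fin (N k)) :
    qvol (fun t => p.real (Set.Iic t) - n.real (Set.Iic t))
        (fun k => u k (l k).castSucc) (fun k => u k (l k).succ) =
      p.real (gridCell u l) - n.real (gridCell u l) := by
  have hle : (fun k => u k (l k).castSucc) ≤ fun k => u k (l k).succ :=
    fun k => hu k (Fin.castSucc_le_succ _)
  rw [qvol_sub, qvol_measureReal_Iic p hle, qvol_measureReal_Iic n hle]
  rfl

lemma vitali_measureReal_Iic_sub_le :
    vitali (fun t => p.real (Set.Iic t) - n.real (Set.Iic t)) ≤
      (p + n) (Set.univ.pi fun _ => Set.Ioc 0 1) := by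
  refine iSup₂_le fun N u => iSup₂_le fun hu h0 => iSup_le fun h1 => ?_
  have hmono k := (hu k).monotone
  simp only [qvol_measureReal_Iic_sub hmono]
  calc ∑ l, ENNReal.ofReal |p.real (gridCell u l) - n.real (gridCell u l)|
      ≤ ∑ l, (p + n) (gridCell u l) := by
        gcongr with l
        rw [Measure.add_apply, measure_add_measure_eq_abs_sub_add_min]
        exact le_self_add
    _ = (p + n) (⋃ l, gridCell u l) := by
        rw [measure_iUnion (pairwise_disjoint_gridCell hmono) (measurableSet_gridCell u),
          tsum_fintype]
    _ = (p + n) (Set.univ.pi fun _ => Set.Ioc 0 1) := by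
        simp only [iUnion_gridCell hmono, h0, h1]

theorem vitali_measureReal_Iic_sub (hpn : p ⟂ₘ n) :
    vitali (fun t => p.real (Set.Iic t) - n.real (Set.Iic t)) =
      (p + n) (Set.univ.pi fun _ => Set.Ioc 0 1) := by
  refine vitali_measureReal_Iic_sub_le.antisymm (le_of_forall_pos_le_add fun ε hε => ?_)
  obtain ⟨δ, hδ, hle⟩ := exists_pos_forall_measure_iUnion_le hpn hε.ne'
  obtain ⟨η, hη, hηδ⟩ := exists_between hδ
  obtain ⟨N, u, hu, h0, h1, hdiam⟩ := exists_grid_ediam_lt hη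
  have hmono (_ : ι) := hu.monotone
  have hcell (l : ι → Fin N) : Metric.ediam (gridCell (fun _ => u) l) < δ :=
    (Metric.ediam_pi_le_of_le fun k => (hdiam (l k)).le).trans_lt hηδ
  calc (p + n) (Set.univ.pi fun _ => Set.Ioc 0 1)
      = (p + n) (⋃ l, gridCell (fun _ => u) l) := by simp only [iUnion_gridCell hmono, h0, h1]
    _ ≤ ∑ l, ENNReal.ofReal |p.real (gridCell (fun _ => u) l) - n.real (gridCell (fun _ => u) l)|
          + ε := hle _ (measurableSet_gridCell _) (pairwise_disjoint_gridCell hmono) hcell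
    _ ≤ vitali (fun t => p.real (Set.Iic t) - n.real (Set.Iic t)) + ε := by
        simp only [← qvol_measureReal_Iic_sub hmono]
        gcongr
        exact le_iSup₂_of_le (fun _ => N) (fun _ => u) <|
          le_iSup₂_of_le (fun _ => hu) (fun _ => h0) <| le_iSup_of_le (fun _ => h1) le_rfl

end Vitali

section Faces

variable {ι : Type*} [DecidableEq ι]

/-- The embedding of `ℝ^T` into `ℝ^ι` as a coordinate subspace, by which the faces of a function
are defined. -/
def zeroExtend (T : Finset ι) (t : {j // j ∈ T} → ℝ) : ι → ℝ :=
  fun k => if h : k ∈ T then t ⟨k, h⟩ else 0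

@[simp] lemma zeroExtend_coe (T : Finset ι) (t : {j // j ∈ T} → ℝ) (k : {j // j ∈ T}) :
    zeroExtend T t k = t k := dif_pos k.2

lemma zeroExtend_of_notMem {T : Finset ι} (t : {j // j ∈ T} → ℝ) {k : ι} (hk : k ∉ T) :
    zeroExtend T t k = 0 := dif_neg hk

lemma measurableEmbedding_zeroExtend [Finite ι] (T : Finset ι) :
    MeasurableEmbedding (zeroExtend T) := by
  refine (Function.LeftInverse.isClosedEmbedding (f := fun s (k : {j // j ∈ T}) => s k)
    (fun t => funext (zeroExtend_coe T t)) (by fun_prop) ?_).measurableEmbedding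
  refine continuous_pi fun k => ?_
  by_cases hk : k ∈ T
  · simpa only [zeroExtend, hk, dite_true] using continuous_apply _
  · simpa only [zeroExtend, hk, dite_false] using continuous_const

lemma zeroExtend_restrict_eq_self {T : Finset ι} {s : ι → ℝ} (hs : ∀ k ∉ T, s k = 0) :
    zeroExtend T (T.restrict s) = s := by
  ext k
  by_cases hk : k ∈ T
  · exact zeroExtend_coe T _ ⟨k, hk⟩
  · rw [zeroExtend_of_notMem _ hk, hs k hk]

lemma mem_image_zeroExtend_iff {T : Finset ι} {A : Set ℝ} {s : ι → ℝ} :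
    s ∈ zeroExtend T '' Set.univ.pi (fun _ => A) ↔ (∀ k ∈ T, s k ∈ A) ∧ ∀ k ∉ T, s k = 0 := by
  constructor
  · rintro ⟨t, ht, rfl⟩
    refine ⟨fun k hk => ?_, fun k => zeroExtend_of_notMem t⟩
    simpa only [zeroExtend_coe T t ⟨k, hk⟩] using ht ⟨k, hk⟩ (Set.mem_univ _)
  · exact fun h => ⟨T.restrict s, fun k _ => h.1 k k.2, zeroExtend_restrict_eq_self h.2⟩

lemma zeroExtend_mono (T : Finset ι) : Monotone (zeroExtend T) := by
  intro t t' h k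
  by_cases hk : k ∈ T
  · simpa only [zeroExtend, hk, dite_true] using h ⟨k, hk⟩
  · simp only [zeroExtend, hk, dite_false, le_refl]

lemma measureReal_comap_zeroExtend_Iic [Finite ι] {p : Measure (ι → ℝ)} (hp : ∀ᵐ s ∂p, 0 ≤ s)
    (T : Finset ι) (t : {j // j ∈ T} → ℝ) :
    (p.comap (zeroExtend T)).real (Set.Iic t) = p.real (Set.Iic (zeroExtend T t)) := by
  rw [measureReal_def, measureReal_def, (measurableEmbedding_zeroExtend T).comap_apply]
  congr 1
  refine measure_congr ?_
  filter_upwards [hp] with s hs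
  refine propext ⟨?_, fun hst => ⟨T.restrict s, fun k => by simpa using hst k,
    zeroExtend_restrict_eq_self fun k hk => ?_⟩⟩
  · rintro ⟨r, hr, rfl⟩
    exact fun k => zeroExtend_mono T hr k
  · exact ((hst k).trans_eq (zeroExtend_of_notMem t hk)).antisymm (hs k)

end Faces

section HardyKrause

variable {α β : Type*} {mα : MeasurableSpace α} {mβ : MeasurableSpace β}

lemma mutuallySingular_comap {f : α → β} (hf : MeasurableEmbedding f) {μ ν : Measure β}
    (h : μ ⟂ₘ ν) : μ.comap f ⟂ₘ ν.comap f := by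
  refine ⟨f ⁻¹' h.nullSet, hf.measurable h.measurableSet_nullSet, ?_, ?_⟩
  · rw [hf.comap_apply]
    exact measure_mono_null (Set.image_preimage_subset _ _) h.measure_nullSet
  · rw [hf.comap_apply, ← Set.preimage_compl]
    exact measure_mono_null (Set.image_preimage_subset _ _) h.measure_compl_nullSet

variable {ι : Type*} [Fintype ι] [DecidableEq ι]

lemma sum_measure_image_zeroExtend (μ : Measure (ι → ℝ)) :
    ∑ T : Finset ι,
        (if T.Nonempty then μ (zeroExtend T '' Set.univ.pi fun _ => Set.Ioc 0 1) else 0) =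
      μ (Set.Icc 0 1 \ {0}) := by
  rw [← Finset.sum_filter, ← measure_biUnion_finset]
  · congr 1 with s
    simp only [Set.mem_iUnion, mem_image_zeroExtend_iff, Finset.mem_filter_univ, exists_prop,
      Set.mem_sdiff, Set.mem_singleton_iff]
    constructor
    · rintro ⟨T, ⟨j, hj⟩, hmem, hzero⟩
      refine ⟨⟨fun k => ?_, fun k => ?_⟩, fun h => (hmem j hj).1.ne' (congrFun h j)⟩ <;>
        by_cases hk : k ∈ T
      · exact (hmem k hk).1.le
      · exact (hzero k hk).ge
      · exact (hmem k hk).2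
      · exact (hzero k hk).trans_le zero_le_one
    · rintro ⟨hs, hs0⟩
      obtain ⟨j, hj⟩ := Function.ne_iff.1 hs0
      refine ⟨univ.filter (s · ≠ 0), ⟨j, by simpa using hj⟩, fun k hk => ?_,
        fun k hk => by simpa using hk⟩
      exact ⟨(hs.1 k).lt_of_ne' (by simpa using hk), hs.2 k⟩
  · refine fun T _ T' _ hTT' => Set.disjoint_left.2 fun s hs hs' => hTT' (Finset.ext fun k => ?_)
    rw [mem_image_zeroExtend_iff] at hs hs'
    have hne {T : Finset ι} (h : (∀ k ∈ T, s k ∈ Set.Ioc 0 1) ∧ ∀ k ∉ T, s k = 0) :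
        k ∈ T ↔ s k ≠ 0 := ⟨fun hk => (h.1 k hk).1.ne', not_imp_comm.1 (h.2 k)⟩
    rw [hne hs, hne hs']
  · exact fun T _ => (measurableEmbedding_zeroExtend T).measurableSet_image.2
      (MeasurableSet.univ_pi fun _ => measurableSet_Ioc)

theorem hk0_measureReal_Iic_sub {p n : Measure (ι → ℝ)} [IsFiniteMeasure p] [IsFiniteMeasure n]
    (hpn : p ⟂ₘ n) (hp : ∀ᵐ s ∂p, 0 ≤ s) (hn : ∀ᵐ s ∂n, 0 ≤ s) :
    hk0 (fun t => p.real (Set.Iic t) - n.real (Set.Iic t)) = (p + n) (Set.Icc 0 1 \ {0}) := by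
  rw [← sum_measure_image_zeroExtend]
  refine Finset.sum_congr rfl fun T _ => if_congr Iff.rfl ?_ rfl
  have hemb := measurableEmbedding_zeroExtend T
  change vitali (fun t => p.real (Set.Iic (zeroExtend T t)) - n.real (Set.Iic (zeroExtend T t))) = _
  simp only [← measureReal_comap_zeroExtend_Iic hp, ← measureReal_comap_zeroExtend_Iic hn]
  rw [vitali_measureReal_Iic_sub (mutuallySingular_comap hemb hpn)]
  simp only [Measure.add_apply, hemb.comap_apply]

end HardyKrause

section Continuity

variable {ι : Type*} [Finite ι] [DecidableEq ι] {p : Measure (ι → ℝ)} [IsFiniteMeasure p]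

lemma continuousWithinAt_measureReal_Iic_update {t : ι → ℝ} {j : ι} {A : Set ℝ}
    (h : ∀ᵐ s ∂p, ∀ᶠ τ in 𝓝[A] (t j), s j ≤ τ ↔ s j ≤ t j) :
    ContinuousWithinAt (fun τ => p.real (Set.Iic (Function.update t j τ))) A (t j) := by
  have hlim : Tendsto (fun τ => p (Set.Iic (Function.update t j τ))) (𝓝[A] (t j))
      (𝓝 (p (Set.Iic t))) := by
    refine tendsto_measure_of_ae_tendsto_indicator_of_isFiniteMeasure _ measurableSet_Iic
      (fun _ => measurableSet_Iic) ?_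
    filter_upwards [h] with s hs
    filter_upwards [hs] with τ hτ
    simp only [Set.mem_Iic, Pi.le_def]
    refine forall_congr' fun k => ?_
    obtain rfl | hk := eq_or_ne k j
    · simpa using hτ
    · simp [hk]
  simpa only [ContinuousWithinAt, Function.update_eq_self, measureReal_def, Function.comp_def] using
    (ENNReal.tendsto_toReal (measure_ne_top p _)).comp hlim

lemma continuousWithinAt_Ici_measureReal_Iic_update (t : ι → ℝ) (j : ι) :
    ContinuousWithinAt (fun τ => p.real (Set.Iic (Function.update t j τ))) (Set.Ici (t j))
      (t j) := by
  refine continuousWithinAt_measureReal_Iic_update (ae_of_all _ fun s => ?_)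
  obtain hs | hs := le_or_gt (s j) (t j)
  · filter_upwards [self_mem_nhdsWithin] with τ hτ
    exact iff_of_true (hs.trans hτ) hs
  · filter_upwards [mem_nhdsWithin_of_mem_nhds (Iio_mem_nhds hs)] with τ hτ
    exact iff_of_false (not_le.2 hτ) hs.not_ge

lemma continuousWithinAt_Iic_measureReal_Iic_update {t : ι → ℝ} {j : ι} (h : ∀ᵐ s ∂p, s j ≠ t j) :
    ContinuousWithinAt (fun τ => p.real (Set.Iic (Function.update t j τ))) (Set.Iic (t j))
      (t j) := by
  refine continuousWithinAt_measureReal_Iic_update ?_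
  filter_upwards [h] with s hs
  obtain hs | hs := hs.lt_or_gt
  · filter_upwards [mem_nhdsWithin_of_mem_nhds (Ioi_mem_nhds hs)] with τ hτ
    exact iff_of_true (le_of_lt hτ) hs.le
  · filter_upwards [self_mem_nhdsWithin] with τ hτ
    exact iff_of_false (lt_of_le_of_lt hτ hs).not_ge hs.not_ge

end Continuity

section Fubini

variable {α : Type*} [MeasurableSpace α] [TopologicalSpace α] [OpensMeasurableSpace α]
  [SecondCountableTopology α] [PartialOrder α] [OrderClosedTopology α] (p : Measure α)

lemma measurable_measure_Iic [SFinite p] : Measurable fun t => p (Set.Iic t) :=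
  measurable_measure_prodMk_left (measurableSet_le measurable_snd measurable_fst)

variable (m : Measure α) [IsFiniteMeasure p] [IsFiniteMeasure m]

lemma integrable_measureReal_Iic : Integrable (fun t => p.real (Set.Iic t)) m := by
  refine Integrable.of_bound (measurable_measure_Iic p).ennreal_toReal.aestronglyMeasurable
    (p.real Set.univ) (ae_of_all _ fun t => ?_)
  rw [Real.norm_of_nonneg measureReal_nonneg]
  exact measureReal_mono (Set.subset_univ _)

lemma integral_measureReal_Iic_eq_integral_measureReal_Ici :
    ∫ t, p.real (Set.Iic t) ∂m = ∫ s, m.real (Set.Ici s) ∂p := by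
  have hle : MeasurableSet {z : α × α | z.2 ≤ z.1} :=
    measurableSet_le measurable_snd measurable_fst
  have hIci : Measurable fun s => m (Set.Ici s) := measurable_measure_prodMk_right hle
  simp only [measureReal_def]
  rw [integral_toReal (measurable_measure_Iic p).aemeasurable
      (ae_of_all _ fun _ => measure_lt_top _ _),
    integral_toReal hIci.aemeasurable (ae_of_all _ fun _ => measure_lt_top _ _)]
  congr 1
  exact (Measure.prod_apply hle).symm.trans (Measure.prod_apply_symm hle)

instance isFiniteMeasure_restrict_Icc_of_compactIccSpace {α : Type*} [MeasurableSpace α]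
    [TopologicalSpace α] [Preorder α] [CompactIccSpace α] (μ : Measure α)
    [IsFiniteMeasureOnCompacts μ] (a b : α) : IsFiniteMeasure (μ.restrict (Set.Icc a b)) :=
  ⟨by simpa only [Measure.restrict_apply_univ] using isCompact_Icc.measure_lt_top⟩

variable {ι : Type*} [Fintype ι]

lemma integral_Icc_measureReal_Iic {p : Measure (ι → ℝ)} [IsFiniteMeasure p]
    (hp : ∀ᵐ s ∂p, 0 ≤ s) (x : ι → ℝ) :
    ∫ t in Set.Icc 0 x, p.real (Set.Iic t) = ∫ s, ∏ j, max (x j - s j) 0 ∂p := by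
  rw [integral_measureReal_Iic_eq_integral_measureReal_Ici]
  refine integral_congr_ae ?_
  filter_upwards [hp] with s hs
  have hinter : Set.Ici s ∩ Set.Icc 0 x = Set.Icc s x :=
    Set.ext fun t => ⟨fun h => ⟨h.1, h.2.2⟩, fun h => ⟨h.1, hs.trans h.1, h.2⟩⟩
  rw [measureReal_restrict_apply measurableSet_Ici, hinter, measureReal_def, Real.volume_Icc_pi]
  simp only [ENNReal.toReal_prod, ENNReal.toReal_ofReal']

end Fubini

section GoodFace

variable {ι : Type*} [Fintype ι] [DecidableEq ι]

lemma goodFace_measureReal_Iic_sub {p n : Measure (ι → ℝ)} [IsFiniteMeasure p] [IsFiniteMeasure n]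
    (hpn : p ⟂ₘ n) (hp : ∀ᵐ s ∂p, ∀ j, s j ∈ Set.Ico 0 1) (hn : ∀ᵐ s ∂n, ∀ j, s j ∈ Set.Ico 0 1) :
    GoodFace fun t => p.real (Set.Iic t) - n.real (Set.Iic t) := by
  refine ⟨?_, fun t _ j => ?_, fun t _ j htj => ?_⟩
  · rw [hk0_measureReal_Iic_sub hpn (hp.mono fun s hs j => (hs j).1)
      (hn.mono fun s hs j => (hs j).1)]
    exact measure_ne_top _ _
  · exact ((continuousWithinAt_Ici_measureReal_Iic_update t j).sub
      (continuousWithinAt_Ici_measureReal_Iic_update t j)).mono Set.Icc_subset_Ici_self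
  · have hne (s : ι → ℝ) (hs : ∀ j, s j ∈ Set.Ico 0 1) : s j ≠ t j := htj ▸ (hs j).2.ne
    exact ((continuousWithinAt_Iic_measureReal_Iic_update (hp.mono hne)).sub
      (continuousWithinAt_Iic_measureReal_Iic_update (hn.mono hne))).mono Set.Icc_subset_Iic_self

end GoodFace

section HalfOpenCube

variable {ι : Type*}

lemma measureReal_Iic_inter_Ico {μ : Measure (ι → ℝ)} (hμ : ∀ᵐ s ∂μ, ∀ j, s j ∈ Set.Ico 0 1)
    (t : ι → ℝ) : μ.real {s | ∀ j, 0 ≤ s j ∧ s j ≤ t j ∧ s j < 1} = μ.real (Set.Iic t) := by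
  refine measureReal_congr ?_
  filter_upwards [hμ] with s hs
  exact propext ⟨fun h j => (h j).2.1, fun h j => ⟨(hs j).1, h j, (hs j).2⟩⟩

variable [Finite ι]

lemma measurableSet_forall_mem_Ico : MeasurableSet {s : ι → ℝ | ∀ j, 0 ≤ s j ∧ s j < 1} := by
  measurability

lemma measurableSet_Iic_inter_Ico (t : ι → ℝ) :
    MeasurableSet {s : ι → ℝ | ∀ j, 0 ≤ s j ∧ s j ≤ t j ∧ s j < 1} := by
  measurability

end HalfOpenCube

namespace MarsRep

variable {d : ℕ} (R : MarsRep d) (S : Finset (Fin d))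

/-- The positive part of the Jordan decomposition of `ν_S`. -/
noncomputable abbrev posPart : Measure ({j // j ∈ S} → ℝ) :=
  (R.ν S).toJordanDecomposition.posPart

/-- The negative part of the Jordan decomposition of `ν_S`. -/
noncomputable abbrev negPart : Measure ({j // j ∈ S} → ℝ) :=
  (R.ν S).toJordanDecomposition.negPart

lemma ae_totalVariation_mem_Ico : ∀ᵐ s ∂(R.ν S).totalVariation, ∀ j, s j ∈ Set.Ico 0 1 :=
  R.conc S

lemma ae_posPart_mem_Ico : ∀ᵐ s ∂(R.posPart S), ∀ j, s j ∈ Set.Ico 0 1 :=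
  (ae_add_measure_iff.1 (R.ae_totalVariation_mem_Ico S)).1

lemma ae_negPart_mem_Ico : ∀ᵐ s ∂(R.negPart S), ∀ j, s j ∈ Set.Ico 0 1 :=
  (ae_add_measure_iff.1 (R.ae_totalVariation_mem_Ico S)).2

lemma ae_posPart_nonneg : ∀ᵐ s ∂(R.posPart S), 0 ≤ s :=
  (R.ae_posPart_mem_Ico S).mono fun _ hs j => (hs j).1

lemma ae_negPart_nonneg : ∀ᵐ s ∂(R.negPart S), 0 ≤ s :=
  (R.ae_negPart_mem_Ico S).mono fun _ hs j => (hs j).1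

lemma repCDF_eq_measureReal_sub :
    repCDF R S = fun t => (R.posPart S).real (Set.Iic t) - (R.negPart S).real (Set.Iic t) := by
  funext t
  rw [repCDF,
    SignedMeasure.apply_eq_posPart_real_sub_negPart_real _ (measurableSet_Iic_inter_Ico t),
    measureReal_Iic_inter_Ico (R.ae_posPart_mem_Ico S),
    measureReal_Iic_inter_Ico (R.ae_negPart_mem_Ico S)]

lemma goodFace_repCDF : GoodFace (repCDF R S) := by
  rw [repCDF_eq_measureReal_sub]
  exact goodFace_measureReal_Iic_sub (R.ν S).toJordanDecomposition.mutuallySingular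
    (R.ae_posPart_mem_Ico S) (R.ae_negPart_mem_Ico S)

lemma hk0_repCDF : hk0 (repCDF R S) = (R.ν S).totalVariation
    ({t : {j // j ∈ S} → ℝ | ∀ j, 0 ≤ t j ∧ t j < 1} \ {fun _ => 0}) := by
  rw [repCDF_eq_measureReal_sub, hk0_measureReal_Iic_sub
    (R.ν S).toJordanDecomposition.mutuallySingular (R.ae_posPart_nonneg S) (R.ae_negPart_nonneg S)]
  refine measure_congr ?_
  filter_upwards [R.ae_totalVariation_mem_Ico S] with s hs
  refine propext (and_congr_left fun _ => iff_of_true ?_ hs)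
  exact ⟨fun j => (hs j).1, fun j => (hs j).2.le⟩

lemma sIntegral_eq_integral_repCDF (x : {j // j ∈ S} → ℝ) :
    sIntegral (R.ν S) (fun t => ∏ j, max (x j - t j) 0) =
      ∫ t in Set.univ.pi fun j => Set.Icc 0 (x j), repCDF R S t := by
  have hbox : (Set.univ.pi fun j => Set.Icc 0 (x j)) = Set.Icc 0 x := Set.pi_univ_Icc 0 x
  rw [hbox, repCDF_eq_measureReal_sub, integral_sub (integrable_measureReal_Iic _ _)
    (integrable_measureReal_Iic _ _), integral_Icc_measureReal_Iic (R.ae_posPart_nonneg S),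
    integral_Icc_measureReal_Iic (R.ae_negPart_nonneg S), sIntegral]

theorem marsFun_eq_integral_repCDF (x : Fin d → ℝ) :
    marsFun R x = R.a0 + ∑ S : Finset (Fin d),
      if S.Nonempty then
        ∫ t in Set.univ.pi fun j : {j // j ∈ S} => Set.Icc (0 : ℝ) (x j.1), repCDF R S t
      else 0 := by
  simp only [marsFun, R.sIntegral_eq_integral_repCDF _ fun j => x j]

theorem marsVar_eq_sum_hk0 :
    marsVar R = ∑ S : Finset (Fin d), if S.Nonempty then hk0 (repCDF R S) else 0 := by
  simp only [marsVar, hk0_repCDF]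

end MarsRep

section Grid

lemma exists_strictMono_grid {α : Type*} [LinearOrder α] [BoundedOrder α] (F : Finset α) :
    ∃ (N : ℕ) (u : Fin (N + 1) → α), StrictMono u ∧ u 0 = ⊥ ∧ u (Fin.last N) = ⊤ ∧
      ↑F ⊆ Set.range u := by
  let A := insert ⊥ (insert ⊤ F)
  have hFA : F ⊆ A := (subset_insert _ _).trans (subset_insert _ _)
  obtain ⟨N, hN⟩ := Nat.exists_eq_add_one_of_ne_zero
    (card_ne_zero_of_mem (mem_insert_self ⊥ _ : ⊥ ∈ A))
  let e := A.orderEmbOfFin hN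
  have hrange : Set.range e = A := A.range_orderEmbOfFin hN
  obtain ⟨i, hi⟩ : ⊥ ∈ Set.range e := by simp [hrange, A]
  obtain ⟨j, hj⟩ : ⊤ ∈ Set.range e := by simp [hrange, A]
  exact ⟨N, e, e.strictMono, le_bot_iff.1 (hi ▸ e.monotone (Fin.zero_le i)),
    top_le_iff.1 (hj ▸ e.monotone (Fin.le_last j)), hrange ▸ Finset.coe_subset.2 hFA⟩

lemma sum_sub_mul_indicator_succ_le {N : ℕ} (b : Fin (N + 1) → ℝ) (q : Fin (N + 1)) :
    ∑ i : Fin N, (b i.succ - b i.castSucc) * (if i.succ ≤ q then 1 else 0) = b q - b 0 := by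
  simp only [mul_ite, mul_one, mul_zero]
  induction q using Fin.induction with
  | zero => simp
  | succ j ih =>
    have hsplit (i : Fin N) : (if i.succ ≤ j.succ then b i.succ - b i.castSucc else 0) =
        (if i.succ ≤ j.castSucc then b i.succ - b i.castSucc else 0) +
          if i = j then b i.succ - b i.castSucc else 0 := by
      grind [Fin.le_def, Fin.val_castSucc]
    simp only [hsplit, Finset.sum_add_distrib, ih, Finset.sum_ite_eq', Finset.mem_univ, if_true]
    ring

end Grid

section FaceIncrements

variable {ι : Type*} [DecidableEq ι] {N : ℕ} {u : Fin (N + 1) → ℝ}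

/-- The quasi-volume of the `T`-face of `g` on the cell of index `l` of the grid whose levels are
`u` in every coordinate. -/
noncomputable def faceIncrement (g : (ι → ℝ) → ℝ) (u : Fin (N + 1) → ℝ) (T : Finset ι)
    (l : {j // j ∈ T} → Fin N) : ℝ :=
  qvol (fun t => g (zeroExtend T t)) (fun k => u (l k).castSucc) fun k => u (l k).succ

/-- The upper corner, as a point of `ℝ^ι`, of the cell of index `l` of the `T`-face. -/
def faceCorner (u : Fin (N + 1) → ℝ) (T : Finset ι) (l : {j // j ∈ T} → Fin N) : ι → ℝ :=
  zeroExtend T fun k => u (l k).succ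

lemma faceIncrement_congr {g G : (ι → ℝ) → ℝ} (hu0 : u 0 = 0)
    (h : ∀ r : ι → Fin (N + 1), g (fun k => u (r k)) = G (fun k => u (r k))) (T : Finset ι)
    (l : {j // j ∈ T} → Fin N) : faceIncrement g u T l = faceIncrement G u T l := by
  refine Finset.sum_congr rfl fun δ _ => congrArg _ ?_
  have hvertex : zeroExtend T (fun k => if δ k then u (l k).castSucc else u (l k).succ) = fun k =>
      u (if hk : k ∈ T then if δ ⟨k, hk⟩ then (l ⟨k, hk⟩).castSucc else (l ⟨k, hk⟩).succ
        else 0) := by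
    ext k
    simp only [zeroExtend]
    split_ifs <;> simp only [hu0]
  simpa only [hvertex] using h _

lemma faceIncrement_sum_mul {κ : Type*} (s : Finset κ) (c : κ → ℝ) (G : κ → (ι → ℝ) → ℝ)
    (T : Finset ι) (l : {j // j ∈ T} → Fin N) :
    faceIncrement (fun t => ∑ i ∈ s, c i * G i t) u T l =
      ∑ i ∈ s, c i * faceIncrement (G i) u T l :=
  qvol_sum_mul s c (fun i t => G i (zeroExtend T t)) _ _

lemma faceCorner_mem_Icc (hu : ∀ i, u i ∈ Set.Icc 0 1) (T : Finset ι)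
    (l : {j // j ∈ T} → Fin N) : faceCorner u T l ∈ Set.Icc 0 1 := by
  refine ⟨fun k => ?_, fun k => ?_⟩ <;> by_cases hk : k ∈ T <;>
    simp [faceCorner, zeroExtend, hk, (hu _).1, (hu _).2]

lemma indicator_Iic_faceCorner (hu : StrictMono u) (hu0 : u 0 = 0) (q : ι → Fin (N + 1))
    (T : Finset ι) (l : {j // j ∈ T} → Fin N) :
    (Set.Iic fun k => u (q k)).indicator (1 : (ι → ℝ) → ℝ) (faceCorner u T l) =
      ∏ k : {j // j ∈ T}, if (l k).succ ≤ q k then 1 else 0 := by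
  classical
  have hle : faceCorner u T l ≤ (fun k => u (q k)) ↔ ∀ k : {j // j ∈ T}, (l k).succ ≤ q k := by
    refine ⟨fun h k => hu.le_iff_le.1 (by simpa [faceCorner] using h k), fun h k => ?_⟩
    by_cases hk : k ∈ T
    · simpa [faceCorner, zeroExtend, hk] using hu.monotone (h ⟨k, hk⟩)
    · simpa [faceCorner, zeroExtend, hk, hu0] using hu.monotone (Fin.zero_le (q k))
  simp only [Set.indicator_apply, Set.mem_Iic, hle, Finset.prod_ite_zero, Finset.mem_univ,
    forall_const, Finset.prod_const_one, Pi.one_apply]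

variable [Fintype ι]

lemma prod_zeroExtend (a : ι → ℝ → ℝ) (T : Finset ι) (t : {j // j ∈ T} → ℝ) :
    ∏ k, a k (zeroExtend T t k) = (∏ k ∈ Tᶜ, a k 0) * ∏ k : {j // j ∈ T}, a k (t k) := by
  rw [← Finset.prod_compl_mul_prod T, ← Finset.prod_coe_sort T]
  simp only [zeroExtend_coe]
  congr 1
  exact Finset.prod_congr rfl fun k hk => by rw [zeroExtend_of_notMem _ (mem_compl.1 hk)]

lemma faceIncrement_prod (a : ι → ℝ → ℝ) (T : Finset ι) (l : {j // j ∈ T} → Fin N) :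
    faceIncrement (fun t => ∏ k, a k (t k)) u T l = (∏ k ∈ Tᶜ, a k 0) *
      ∏ k : {j // j ∈ T}, (a k (u (l k).succ) - a k (u (l k).castSucc)) := by
  simp only [faceIncrement, prod_zeroExtend]
  have hconst := qvol_sum_mul (univ : Finset Unit) (fun _ => ∏ k ∈ Tᶜ, a k 0)
    (fun _ t => ∏ k : {j // j ∈ T}, a k (t k)) (fun k => u (l k).castSucc) fun k => u (l k).succ
  simp only [univ_unique, Finset.sum_singleton] at hconst
  rw [hconst, qvol_prod fun k : {j // j ∈ T} => a k]

lemma sum_faceIncrement_prod_mul_indicator (hu : StrictMono u) (hu0 : u 0 = 0) (a : ι → ℝ → ℝ)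
    (q : ι → Fin (N + 1)) :
    ∑ T : Finset ι, ∑ l : {j // j ∈ T} → Fin N, faceIncrement (fun t => ∏ k, a k (t k)) u T l *
      (Set.Iic fun k => u (q k)).indicator 1 (faceCorner u T l) = ∏ k, a k (u (q k)) := by
  have hface (T : Finset ι) : ∑ l : {j // j ∈ T} → Fin N,
      faceIncrement (fun t => ∏ k, a k (t k)) u T l *
        (Set.Iic fun k => u (q k)).indicator 1 (faceCorner u T l) =
      (∏ k ∈ T, (a k (u (q k)) - a k 0)) * ∏ k ∈ univ \ T, a k 0 := by
    simp only [faceIncrement_prod, indicator_Iic_faceCorner hu hu0, mul_assoc,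
      ← Finset.prod_mul_distrib, ← Finset.mul_sum]
    rw [mul_comm, ← compl_eq_univ_sdiff, ← Fintype.piFinset_univ,
      ← Finset.prod_univ_sum (fun _ => univ) fun (k : {j // j ∈ T}) (i : Fin N) =>
        (a k (u i.succ) - a k (u i.castSucc)) * if i.succ ≤ q k then 1 else 0,
      ← Finset.prod_coe_sort T]
    exact congrArg (· * _) <| Finset.prod_congr rfl fun k _ =>
      (sum_sub_mul_indicator_succ_le (fun i => a k (u i)) (q k)).trans (by rw [hu0])
  simp only [hface]
  rw [← Finset.powerset_univ, ← Finset.prod_add]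
  simp only [sub_add_cancel]

/-- Both sides are linear in the values of `g` at the grid points, which reduces the identity to
products of functions of one coordinate. -/
theorem sum_faceIncrement_mul_indicator (hu : StrictMono u) (hu0 : u 0 = 0) (g : (ι → ℝ) → ℝ)
    (q : ι → Fin (N + 1)) :
    ∑ T : Finset ι, ∑ l : {j // j ∈ T} → Fin N, faceIncrement g u T l *
      (Set.Iic fun k => u (q k)).indicator 1 (faceCorner u T l) = g fun k => u (q k) := by
  have hinterp (q : ι → Fin (N + 1)) : g (fun k => u (q k)) = ∑ r : ι → Fin (N + 1),
      g (fun k => u (r k)) * ∏ k, ({u (r k)} : Set ℝ).indicator 1 (u (q k)) := by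
    simp only [Set.indicator_apply, Set.mem_singleton_iff, hu.injective.eq_iff, Pi.one_apply,
      Finset.prod_ite_zero, Finset.prod_const_one, Finset.mem_univ, forall_const, ← funext_iff,
      mul_ite, mul_one, mul_zero, Finset.sum_ite_eq, if_true]
  have hincr (T : Finset ι) (l : {j // j ∈ T} → Fin N) : faceIncrement g u T l =
      ∑ r : ι → Fin (N + 1), g (fun k => u (r k)) *
        faceIncrement (fun t => ∏ k, ({u (r k)} : Set ℝ).indicator 1 (t k)) u T l :=
    (faceIncrement_congr hu0 hinterp T l).trans (faceIncrement_sum_mul _ _ _ T l)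
  simp only [hincr]
  simp only [Finset.sum_mul, mul_assoc]
  rw [hinterp, Finset.sum_congr rfl fun T _ => Finset.sum_comm, Finset.sum_comm]
  simp only [← Finset.mul_sum]
  exact Finset.sum_congr rfl fun r _ => congrArg _ <|
    sum_faceIncrement_prod_mul_indicator hu hu0 (fun k => ({u (r k)} : Set ℝ).indicator 1) q

lemma sum_abs_faceIncrement_le (hu : StrictMono u) (hu0 : u 0 = 0) (hu1 : u (Fin.last N) = 1)
    (g : (ι → ℝ) → ℝ) :
    ∑ T : Finset ι, ∑ l : {j // j ∈ T} → Fin N, ENNReal.ofReal |faceIncrement g u T l| ≤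
      hk0 g + ENNReal.ofReal |g 0| := by
  have hempty : ∑ T : Finset ι, (if T = ∅ then ENNReal.ofReal |g 0| else 0) =
      ENNReal.ofReal |g 0| := by simp
  rw [hk0, ← hempty, ← Finset.sum_add_distrib]
  refine Finset.sum_le_sum fun T _ => ?_
  rcases T.eq_empty_or_nonempty with rfl | hT
  · have hzero (t : {j // j ∈ (∅ : Finset ι)} → ℝ) : zeroExtend ∅ t = 0 :=
      funext fun k => zeroExtend_of_notMem t (notMem_empty k)
    simp [faceIncrement, qvol, hzero]
  · rw [if_pos hT, if_neg hT.ne_empty, add_zero]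
    exact le_iSup₂_of_le (fun _ => N) (fun _ => u) <| le_iSup₂_of_le (fun _ => hu) (fun _ => hu0) <|
      le_iSup_of_le (fun _ => hu1) le_rfl

end FaceIncrements

section Atomic

open scoped NNReal

variable {κ E : Type*} [Fintype κ] [MeasurableSpace E]

/-- The sum of the point masses `max (w i) 0` at the points `x i`. The atoms of negative weight are
dropped, so that the Jordan parts of `∑ i, w i • δ (x i)` are bounded by the atomic measures of
`w` and of `-w`. -/
noncomputable def atomicMeasure (w : κ → ℝ) (x : κ → E) : FiniteMeasure E :=
  ∑ i, (w i).toNNReal • (diracProba (x i)).toFiniteMeasure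

variable (w : κ → ℝ) (x : κ → E)

lemma atomicMeasure_apply {A : Set E} (hA : MeasurableSet A) :
    atomicMeasure w x A = ∑ i, (w i).toNNReal * A.indicator 1 (x i) := by
  rw [← ENNReal.coe_inj, FiniteMeasure.ennreal_coeFn_eq_coeFn_toMeasure, atomicMeasure,
    FiniteMeasure.toMeasure_sum, Measure.finsetSum_apply]
  push_cast
  refine Finset.sum_congr rfl fun i _ => ?_
  have hdirac : ((diracProba (x i)).toFiniteMeasure : Measure E) A = A.indicator 1 (x i) :=
    Measure.dirac_apply' _ hA
  rw [Pi.smul_apply, hdirac]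
  by_cases hi : x i ∈ A <;> simp [hi, ENNReal.smul_def]

lemma mass_atomicMeasure_le {C : ℝ≥0} (hw : ∑ i, ENNReal.ofReal |w i| ≤ C) :
    (atomicMeasure w x).mass ≤ C := by
  rw [FiniteMeasure.mass, atomicMeasure_apply w x MeasurableSet.univ]
  simp only [Set.indicator_univ, Pi.one_apply, mul_one]
  refine le_trans (Finset.sum_le_sum fun i _ => Real.toNNReal_mono (le_abs_self (w i))) ?_
  simp only [ENNReal.ofReal] at hw
  exact_mod_cast hw

lemma atomicMeasure_eq_zero {A : Set E} (hA : MeasurableSet A) (hx : ∀ i, x i ∉ A) :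
    atomicMeasure w x A = 0 := by
  simp [atomicMeasure_apply w x hA, hx]

lemma atomicMeasure_sub_atomicMeasure_neg {A : Set E} (hA : MeasurableSet A) :
    (atomicMeasure w x A : ℝ) - atomicMeasure (-w) x A = ∑ i, w i * A.indicator 1 (x i) := by
  classical
  simp only [atomicMeasure_apply _ x hA, NNReal.coe_sum, NNReal.coe_mul, Real.coe_toNNReal',
    ← Finset.sum_sub_distrib, ← sub_mul, Pi.neg_apply, max_zero_sub_max_neg_zero_eq_self]
  refine Finset.sum_congr rfl fun i _ => ?_
  by_cases hi : x i ∈ A <;> simp [hi]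

end Atomic

section Portmanteau

variable {κ Ω : Type*} [MeasurableSpace Ω] [TopologicalSpace Ω] [HasOuterApproxClosed Ω]
  [BorelSpace Ω] {L : Filter κ} {μs : κ → FiniteMeasure Ω} {μ : FiniteMeasure Ω} {A : Set Ω}

lemma limsup_measure_le_of_null_frontier (h : Tendsto μs L (𝓝 μ))
    (hA : (μ : Measure Ω) (frontier A) = 0) :
    L.limsup (fun i => (μs i : Measure Ω) A) ≤ (μ : Measure Ω) A :=
  calc
    L.limsup (fun i => (μs i : Measure Ω) A)
      ≤ L.limsup fun i => (μs i : Measure Ω) (closure A) :=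
        limsup_le_limsup (.of_forall fun _ => measure_mono subset_closure)
    _ ≤ (μ : Measure Ω) (closure A) :=
        FiniteMeasure.limsup_measure_closed_le_of_tendsto h isClosed_closure
    _ = (μ : Measure Ω) A := measure_closure_of_null_frontier hA

theorem tendsto_measure_of_null_frontier_of_tendsto (h : Tendsto μs L (𝓝 μ))
    (hA : (μ : Measure Ω) (frontier A) = 0) :
    Tendsto (fun i => (μs i : Measure Ω) A) L (𝓝 ((μ : Measure Ω) A)) := by
  refine tendsto_iff_ultrafilter _ _ _ |>.2 fun U hU => ?_
  have hlim (B : Set Ω) (hB : (μ : Measure Ω) (frontier B) = 0) :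
      ∃ b ≤ (μ : Measure Ω) B, Tendsto (fun i => (μs i : Measure Ω) B) U (𝓝 b) := by
    have hb := (U.map fun i => (μs i : Measure Ω) B).le_nhds_lim
    exact ⟨_, (Tendsto.limsup_eq hb).symm.trans_le
      (limsup_measure_le_of_null_frontier (h.mono_left hU) hB), hb⟩
  obtain ⟨a, ha, hta⟩ := hlim A hA
  obtain ⟨b, hb, htb⟩ := hlim Aᶜ (by rwa [frontier_compl])
  have huniv : (μ : Measure Ω) Set.univ ≤ a + b := by
    have hmass :
        Tendsto (fun i => (μs i : Measure Ω) Set.univ) U (𝓝 ((μ : Measure Ω) Set.univ)) := by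
      simpa only [FiniteMeasure.ennreal_mass] using ENNReal.tendsto_coe.2 (h.mono_left hU).mass
    refine le_of_tendsto_of_tendsto' hmass (hta.add htb) fun i => ?_
    exact (Set.union_compl_self A).symm ▸ measure_union_le A Aᶜ
  rw [← measure_add_measure_compl₀ (nullMeasurableSet_of_null_frontier hA)] at huniv
  have hle : (μ : Measure Ω) A ≤ a := ENNReal.le_of_add_le_add_right (measure_ne_top _ Aᶜ) <|
    huniv.trans (by gcongr)
  rwa [← ha.antisymm hle]

end Portmanteau

section Orthants

variable {ι : Type*} [Finite ι]

lemma interior_Iic_pi (t : ι → ℝ) : interior (Set.Iic t) = Set.univ.pi fun k => Set.Iio (t k) := by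
  simp only [← Set.pi_univ_Iic, interior_pi_set Set.finite_univ, interior_Iic]

lemma frontier_Iic_pi_subset (t : ι → ℝ) : frontier (Set.Iic t) ⊆ ⋃ k, {s | s k = t k} := by
  rw [isClosed_Iic.frontier_eq, interior_Iic_pi]
  rintro s ⟨hst, hs⟩
  simp only [Set.mem_univ_pi, Set.mem_Iio, not_forall, not_lt] at hs
  obtain ⟨k, hk⟩ := hs
  exact Set.mem_iUnion.2 ⟨k, (hst k).antisymm hk⟩

end Orthants

section Orthants

variable {ι : Type*} [Fintype ι]

lemma ae_measure_frontier_Iic_eq_zero (μ : Measure (ι → ℝ)) [IsFiniteMeasure μ] :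
    ∀ᵐ t : ι → ℝ, μ (frontier (Set.Iic t)) = 0 := by
  have hlevel (k : ι) : ∀ᵐ t : ι → ℝ, μ {s | s k = t k} = 0 := by
    have hcount := Measure.countable_meas_level_set_pos (μ := μ) (measurable_pi_apply k)
    have hreal : ∀ᵐ c : ℝ, μ {s | s k = c} = 0 := by
      filter_upwards [hcount.ae_notMem volume] with c hc
      exact nonpos_iff_eq_zero.1 (not_lt.1 hc)
    exact (Measure.quasiMeasurePreserving_eval (μ := fun _ : ι => (volume : Measure ℝ)) k).ae hreal
  filter_upwards [ae_all_iff.2 hlevel] with t ht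
  exact measure_mono_null (frontier_Iic_pi_subset t) (measure_iUnion_null ht)

end Orthants

section Realization

open scoped NNReal

variable {ι : Type*} [Fintype ι] [DecidableEq ι]

lemma exists_finiteMeasure_measure_Iic_sub_eq_on_finset {g : (ι → ℝ) → ℝ} {C : ℝ≥0}
    (hC : hk0 g + ENNReal.ofReal |g 0| ≤ C) (F : Finset (Set.Icc (0 : ℝ) 1)) :
    ∃ P Q : FiniteMeasure (ι → ℝ), (P.mass ≤ C ∧ P (Set.Icc 0 1)ᶜ = 0) ∧
      (Q.mass ≤ C ∧ Q (Set.Icc 0 1)ᶜ = 0) ∧ ∀ t : ι → Set.Icc (0 : ℝ) 1, (∀ k, t k ∈ F) →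
        (P (Set.Iic fun k => t k) : ℝ) - Q (Set.Iic fun k => t k) = g fun k => t k := by
  obtain ⟨N, v, hv, hv0, hv1, hFv⟩ := exists_strictMono_grid F
  let u : Fin (N + 1) → ℝ := fun i => v i
  have hu : StrictMono u := hv
  have hu0 : u 0 = 0 := congrArg Subtype.val hv0
  have hu1 : u (Fin.last N) = 1 := congrArg Subtype.val hv1
  let w : (Σ T : Finset ι, {j // j ∈ T} → Fin N) → ℝ := fun c => faceIncrement g u c.1 c.2
  let x : (Σ T : Finset ι, {j // j ∈ T} → Fin N) → ι → ℝ := fun c => faceCorner u c.1 c.2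
  have hw : ∑ c, ENNReal.ofReal |w c| ≤ C := by
    rw [Fintype.sum_sigma]
    exact (sum_abs_faceIncrement_le hu hu0 hu1 g).trans hC
  have hx (c) : x c ∉ (Set.Icc (0 : ι → ℝ) 1)ᶜ :=
    not_not.2 (faceCorner_mem_Icc (fun i => (v i).2) c.1 c.2)
  refine ⟨atomicMeasure w x, atomicMeasure (-w) x, ⟨mass_atomicMeasure_le _ _ hw,
    atomicMeasure_eq_zero _ _ measurableSet_Icc.compl hx⟩, ⟨mass_atomicMeasure_le _ _ (by simpa),
    atomicMeasure_eq_zero _ _ measurableSet_Icc.compl hx⟩, fun t ht => ?_⟩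
  choose q hq using fun k => hFv (ht k)
  obtain rfl : (fun k => v (q k)) = t := funext hq
  rw [atomicMeasure_sub_atomicMeasure_neg w x measurableSet_Iic, Fintype.sum_sigma]
  exact sum_faceIncrement_mul_indicator hu hu0 g q

theorem exists_finiteMeasure_measureReal_Iic_sub_eq {g : (ι → ℝ) → ℝ} (hg : hk0 g ≠ ⊤) :
    ∃ P Q : FiniteMeasure (ι → ℝ), P (Set.Icc 0 1)ᶜ = 0 ∧ Q (Set.Icc 0 1)ᶜ = 0 ∧
      ∀ t ∈ Set.Icc 0 1, (P : Measure (ι → ℝ)) (frontier (Set.Iic t)) = 0 →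
        (Q : Measure (ι → ℝ)) (frontier (Set.Iic t)) = 0 →
        (P : Measure (ι → ℝ)).real (Set.Iic t) - (Q : Measure (ι → ℝ)).real (Set.Iic t) = g t := by
  lift hk0 g + ENNReal.ofReal |g 0| to ℝ≥0 using by simp [hg] with C hC
  choose P Q hP hQ hPQ using exists_finiteMeasure_measure_Iic_sub_eq_on_finset hC.ge
  let U : Ultrafilter (Finset (Set.Icc (0 : ℝ) 1)) := Ultrafilter.of atTop
  have hcompact := isCompact_setOfPred_finiteMeasure_le_of_isCompact C
    (isCompact_Icc : IsCompact (Set.Icc (0 : ι → ℝ) 1))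
  obtain ⟨p, hp, hPp⟩ := hcompact.ultrafilter_le_nhds' (U.map P)
    (Ultrafilter.mem_map.2 (Filter.univ_mem' hP))
  obtain ⟨q, hq, hQq⟩ := hcompact.ultrafilter_le_nhds' (U.map Q)
    (Ultrafilter.mem_map.2 (Filter.univ_mem' hQ))
  refine ⟨p, q, hp.2, hq.2, fun t ht hpt hqt => ?_⟩
  have hlim {μs : Finset (Set.Icc (0 : ℝ) 1) → FiniteMeasure (ι → ℝ)} {μ : FiniteMeasure (ι → ℝ)}
      (hμ : Tendsto μs U (𝓝 μ)) (hμt : (μ : Measure (ι → ℝ)) (frontier (Set.Iic t)) = 0) :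
      Tendsto (fun F => (μs F (Set.Iic t) : ℝ)) U (𝓝 ((μ : Measure (ι → ℝ)).real (Set.Iic t))) :=
    (ENNReal.tendsto_toReal (measure_ne_top _ _)).comp
      (tendsto_measure_of_null_frontier_of_tendsto hμ hμt)
  refine tendsto_nhds_unique_of_eventuallyEq ((hlim hPp hpt).sub (hlim hQq hqt))
    (tendsto_const_nhds (x := g t)) (Ultrafilter.of_le atTop ?_)
  let τ : ι → Set.Icc (0 : ℝ) 1 := fun k => ⟨t k, ht.1 k, ht.2 k⟩
  filter_upwards [eventually_ge_atTop (univ.image τ)] with F hF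
  exact hPQ F τ fun k => hF (mem_image_of_mem _ (mem_univ k))

end Realization

lemma totalVariation_toSignedMeasure_sub_le {E : Type*} [MeasurableSpace E] (p q : Measure E)
    [IsFiniteMeasure p] [IsFiniteMeasure q] :
    (p.toSignedMeasure - q.toSignedMeasure).totalVariation ≤ p + q := by
  rw [SignedMeasure.totalVariation_eq_variation, sub_eq_add_neg]
  refine VectorMeasure.variation_add_le.trans ?_
  rw [VectorMeasure.variation_neg, Measure.variation_toSignedMeasure,
    Measure.variation_toSignedMeasure]

section HalfOpenCube

variable {ι : Type*}

lemma measureReal_Iic_inter_Ico_restrict [Finite ι] {μ : Measure (ι → ℝ)}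
    (hμ : μ (Set.Icc 0 1)ᶜ = 0) {t : ι → ℝ} (ht : t ≤ 1) (hμt : μ (frontier (Set.Iic t)) = 0) :
    (μ.restrict {s | ∀ j, 0 ≤ s j ∧ s j < 1}).real {s | ∀ j, 0 ≤ s j ∧ s j ≤ t j ∧ s j < 1} =
      μ.real (Set.Iic t) := by
  have hIco : ∀ᵐ s ∂(μ.restrict {s | ∀ j, 0 ≤ s j ∧ s j < 1}), ∀ j, s j ∈ Set.Ico 0 1 :=
    ae_restrict_mem measurableSet_forall_mem_Ico
  rw [measureReal_Iic_inter_Ico hIco, measureReal_restrict_apply' measurableSet_forall_mem_Ico]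
  refine measureReal_congr ?_
  have hcube : ∀ᵐ s ∂μ, s ∈ Set.Icc 0 1 := hμ
  filter_upwards [hcube, measure_eq_zero_iff_ae_notMem.1 hμt] with s hs hst
  refine propext (and_iff_left_of_imp fun h j => ⟨hs.1 j, ?_⟩)
  have hinterior : s ∈ interior (Set.Iic t) := by
    by_contra hnot
    exact hst ⟨subset_closure h, hnot⟩
  rw [interior_Iic_pi] at hinterior
  exact (hinterior j trivial).trans_le (ht j)

theorem exists_signedMeasure_Iic_inter_Ico_ae_eq [Fintype ι] [DecidableEq ι] {g : (ι → ℝ) → ℝ}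
    (hg : hk0 g ≠ ⊤) :
    ∃ ν : SignedMeasure (ι → ℝ), ν.totalVariation {t | ∀ j, 0 ≤ t j ∧ t j < 1}ᶜ = 0 ∧
      ∀ᵐ t, t ∈ Set.Icc 0 1 → ν {s | ∀ j, 0 ≤ s j ∧ s j ≤ t j ∧ s j < 1} = g t := by
  obtain ⟨P, Q, hP, hQ, hPQ⟩ := exists_finiteMeasure_measureReal_Iic_sub_eq hg
  rw [FiniteMeasure.null_iff_toMeasure_null] at hP hQ
  let p := (P : Measure (ι → ℝ)).restrict {t | ∀ j, 0 ≤ t j ∧ t j < 1}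
  let q := (Q : Measure (ι → ℝ)).restrict {t | ∀ j, 0 ≤ t j ∧ t j < 1}
  refine ⟨p.toSignedMeasure - q.toSignedMeasure, ?_, ?_⟩
  · exact (ae_add_measure_iff.2 ⟨ae_restrict_mem measurableSet_forall_mem_Ico,
      ae_restrict_mem measurableSet_forall_mem_Ico⟩).filter_mono
      (ae_mono (totalVariation_toSignedMeasure_sub_le p q))
  · filter_upwards [ae_measure_frontier_Iic_eq_zero (P : Measure (ι → ℝ)),
      ae_measure_frontier_Iic_eq_zero (Q : Measure (ι → ℝ))] with t hPt hQt ht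
    rw [Measure.toSignedMeasure_sub_apply (measurableSet_Iic_inter_Ico t),
      measureReal_Iic_inter_Ico_restrict hP ht.2 hPt,
      measureReal_Iic_inter_Ico_restrict hQ ht.2 hQt, hPQ t ht hPt hQt]

end HalfOpenCube

theorem exists_marsFun_eq_add_sum_integral {d : ℕ} (a0 : ℝ)
    {g : ∀ S : Finset (Fin d), ({j // j ∈ S} → ℝ) → ℝ} (hg : ∀ S, S.Nonempty → hk0 (g S) ≠ ⊤) :
    ∃ R : MarsRep d, ∀ x : Fin d → ℝ, (∀ k, x k ∈ Set.Icc (0 : ℝ) 1) →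
      marsFun R x = a0 + ∑ S : Finset (Fin d),
        if S.Nonempty then
          ∫ t in Set.univ.pi fun j : {j // j ∈ S} => Set.Icc (0 : ℝ) (x j.1), g S t
        else 0 := by
  have hex (S : Finset (Fin d)) : ∃ ν : SignedMeasure ({j // j ∈ S} → ℝ),
      ν.totalVariation {t | ∀ j, 0 ≤ t j ∧ t j < 1}ᶜ = 0 ∧ (S.Nonempty → ∀ᵐ t,
        t ∈ Set.Icc 0 1 → ν {s | ∀ j, 0 ≤ s j ∧ s j ≤ t j ∧ s j < 1} = g S t) := by
    by_cases hS : S.Nonempty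
    · simpa only [hS, forall_const] using exists_signedMeasure_Iic_inter_Ico_ae_eq (hg S hS)
    · exact ⟨0, by simp [SignedMeasure.totalVariation_zero], fun h => absurd h hS⟩
  choose ν hconc hν using hex
  refine ⟨⟨a0, ν, hconc⟩, fun x hx => ?_⟩
  rw [MarsRep.marsFun_eq_integral_repCDF]
  refine congrArg (a0 + ·) <|
    Finset.sum_congr rfl fun S _ => ite_congr rfl (fun hS => ?_) fun _ => rfl
  refine setIntegral_congr_ae (MeasurableSet.univ_pi fun _ => measurableSet_Icc) ?_
  filter_upwards [hν S hS] with t ht htx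
  exact ht ⟨fun j => (htx j trivial).1, fun j => (htx j trivial).2.trans (hx j).2⟩

theorem statement17_general (d : ℕ) (f : (Fin d → ℝ) → ℝ) :
    List.TFAE
      [∃ R : MarsRep d, ∀ x : Fin d → ℝ, (∀ k, x k ∈ Set.Icc (0 : ℝ) 1) → f x = marsFun R x,
      ∃ (a0 : ℝ) (g : ∀ S : Finset (Fin d), ({j // j ∈ S} → ℝ) → ℝ),
        (∀ S : Finset (Fin d), S.Nonempty → GoodFace (g S)) ∧
        ∀ x : Fin d → ℝ, (∀ k, x k ∈ Set.Icc (0 : ℝ) 1) →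
          f x = a0 + ∑ S : Finset (Fin d),
            if S.Nonempty then
              ∫ t in Set.univ.pi fun j : {j // j ∈ S} => Set.Icc (0 : ℝ) (x j.1), g S t
            else 0,
      ∃ (a0 : ℝ) (g : ∀ S : Finset (Fin d), ({j // j ∈ S} → ℝ) → ℝ),
        (∀ S : Finset (Fin d), S.Nonempty → hk0 (g S) ≠ ⊤) ∧
        ∀ x : Fin d → ℝ, (∀ k, x k ∈ Set.Icc (0 : ℝ) 1) →
          f x = a0 + ∑ S : Finset (Fin d),
            if S.Nonempty then
              ∫ t in Set.univ.pi fun j : {j // j ∈ S} => Set.Icc (0 : ℝ) (x j.1), g S t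
            else 0] ∧
    ∀ R : MarsRep d, (∀ S : Finset (Fin d), GoodFace (repCDF R S)) ∧
      (∀ x : Fin d → ℝ, marsFun R x = R.a0 + ∑ S : Finset (Fin d),
        if S.Nonempty then
          ∫ t in Set.univ.pi fun j : {j // j ∈ S} => Set.Icc (0 : ℝ) (x j.1), repCDF R S t
        else 0) ∧
      marsVar R = ∑ S : Finset (Fin d), if S.Nonempty then hk0 (repCDF R S) else 0 := by
  refine ⟨?_, fun R => ⟨R.goodFace_repCDF, R.marsFun_eq_integral_repCDF, R.marsVar_eq_sum_hk0⟩⟩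
  tfae_have 1 → 2 := fun ⟨R, hR⟩ => ⟨R.a0, repCDF R, fun S _ => R.goodFace_repCDF S,
    fun x hx => (hR x hx).trans (R.marsFun_eq_integral_repCDF x)⟩
  tfae_have 2 → 3 := fun ⟨a0, g, hg, hf⟩ => ⟨a0, g, fun S hS => (hg S hS).1, hf⟩
  tfae_have 3 → 1 := by
    rintro ⟨a0, g, hg, hf⟩
    obtain ⟨R, hR⟩ := exists_marsFun_eq_add_sum_integral a0 hg
    exact ⟨R, fun x hx => (hf x hx).trans (hR x hx).symm⟩
  tfae_finish

/-- A function on `[0,1]^d` admits a MARS representation iff it can be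
written as `a₀ + Σ_{∅≠S} ∫_{Π_{j∈S}[0,x_j]} g_S` with each `g_S` of finite HK0 variation
and the appropriate one-sided continuity; moreover, the two representations correspond
via `g_S(t) = ν_S([0,t] ∩ [0,1)^S)`, and then `Σ_S |ν_S|(… \ {0}) = Σ_S V_HK0(g_S)`. -/
theorem statement17 (d : ℕ) (hd : 1 ≤ d) (f : (Fin d → ℝ) → ℝ) :
    ((∃ R : MarsRep d, ∀ x : Fin d → ℝ, (∀ k, x k ∈ Set.Icc (0 : ℝ) 1) →
        f x = marsFun R x) ↔
      (∃ (a0 : ℝ) (g : ∀ S : Finset (Fin d), ({j // j ∈ S} → ℝ) → ℝ),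
        (∀ S : Finset (Fin d), S.Nonempty → GoodFace (g S)) ∧
        ∀ x : Fin d → ℝ, (∀ k, x k ∈ Set.Icc (0 : ℝ) 1) →
          f x = a0 + ∑ S : Finset (Fin d),
            if S.Nonempty then
              ∫ t in Set.univ.pi fun j : {j // j ∈ S} => Set.Icc (0 : ℝ) (x j.1),
                g S t
            else 0)) ∧
    (∀ R : MarsRep d,
      (∀ S : Finset (Fin d), S.Nonempty → GoodFace (repCDF R S)) ∧
      (∀ x : Fin d → ℝ, (∀ k, x k ∈ Set.Icc (0 : ℝ) 1) →
        marsFun R x = R.a0 + ∑ S : Finset (Fin d),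
          if S.Nonempty then
            ∫ t in Set.univ.pi fun j : {j // j ∈ S} => Set.Icc (0 : ℝ) (x j.1),
              repCDF R S t
          else 0) ∧
      marsVar R = ∑ S : Finset (Fin d),
        if S.Nonempty then hk0 (repCDF R S) else 0) := by
  obtain ⟨hTFAE, hR⟩ := statement17_general d f
  exact ⟨hTFAE.out 0 1, fun R => ⟨fun S _ => (hR R).1 S, fun x _ => (hR R).2.1 x, (hR R).2.2⟩⟩
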